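/- arXiv:2603.08979 — 5 statements merged into one kernel-verified Lean document; each statement's English description precedes it below -/
import Mathlib

section
/- Adopt the general MDP data. Then: (a) for every continuous bounded v : X → ℝ and every t ≥ 1, the function x ↦ (Φ_t v)(x) is continuous and bounded on X; (b) every bounded measurable J* : X → ℝ satisfying the Bellman fixed-point equation Φ J* = J* is continuous on X and satisfies ‖J*‖_∞ ≤ ‖c‖_∞/(1−α). (Lemma C.1.) -/
/-!
The Bellman operator preserves bounded continuous functions and is a sup-norm contraction.

For `v` continuous and bounded, the one-step value `bellmanQ` of a state-action pair is continuous
along sequences in the graph of `A`, by dominated convergence (`tendsto_bellmanQ`). Berge's maximum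
theorem then makes `bellmanPhi` continuous (`continuous_bellmanPhi`): upper hemicontinuity lets
minimizers converge along a subsequence to an admissible action, and lower hemicontinuity, applied
to a minimizer at the limit state, shows that this limit action is optimal.

A bounded measurable fixed point `J` satisfies `|Φᵗ 0 - J| ≤ αᵗ ‖J‖` by the contraction estimate
(`bellmanPhi_le_add`), so `J` is a uniform limit of continuous functions. The bound on `J` follows
from `‖J‖ ≤ Mc + α ‖J‖`.
-/

open MeasureTheory Filter Topology
open scoped ENNReal NNReal

noncomputable section

/-- Sequential upper hemicontinuity of a set-valued map: every sequence `a_k ∈ A(x_k)` with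
`x_k → x` has a limit point (a convergent subsequence with limit) in `A x`. -/
def UpperHemicontinuousSeq {X 𝔸 : Type*} [TopologicalSpace X] [TopologicalSpace 𝔸]
    (A : X → Set 𝔸) : Prop :=
  ∀ (x : X) (xk : ℕ → X) (ak : ℕ → 𝔸), Tendsto xk atTop (𝓝 x) →
    (∀ k, ak k ∈ A (xk k)) →
    ∃ a ∈ A x, ∃ φ : ℕ → ℕ, StrictMono φ ∧ Tendsto (fun m => ak (φ m)) atTop (𝓝 a)

/-- Sequential lower hemicontinuity of a set-valued map: for every `x_k → x` and `a ∈ A x`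
there are a subsequence `x_{k_m}` and `a_m ∈ A(x_{k_m})` with `a_m → a`. -/
def LowerHemicontinuousSeq {X 𝔸 : Type*} [TopologicalSpace X] [TopologicalSpace 𝔸]
    (A : X → Set 𝔸) : Prop :=
  ∀ (x : X) (xk : ℕ → X), Tendsto xk atTop (𝓝 x) → ∀ a ∈ A x,
    ∃ φ : ℕ → ℕ, StrictMono φ ∧ ∃ am : ℕ → 𝔸,
      (∀ m, am m ∈ A (xk (φ m))) ∧ Tendsto am atTop (𝓝 a)

/-- The Bellman operator `(Φ v)(x) = min_{a ∈ A x} ∫ (c(x,a,z) + α v(F(x,a,z))) μ(dz)`,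
written with an infimum. -/
def bellmanPhi {X 𝔸 W : Type*} [MeasurableSpace W] (A : X → Set 𝔸)
    (F : X → 𝔸 → W → X) (c : X → 𝔸 → W → ℝ) (α : ℝ) (μ : Measure W)
    (v : X → ℝ) (x : X) : ℝ :=
  sInf {r : ℝ | ∃ a ∈ A x, r = ∫ z, (c x a z + α * v (F x a z)) ∂μ}

section Bellman

variable {X 𝔸 W : Type*}

lemma abs_integrand_le {A : X → Set 𝔸} {F : X → 𝔸 → W → X} {c : X → 𝔸 → W → ℝ} {Mc α M : ℝ}
    {v : X → ℝ} (hcbd : ∀ x a z, a ∈ A x → c x a z ≤ Mc) (hcnn : ∀ x a z, a ∈ A x → 0 ≤ c x a z)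
    (hα0 : 0 < α) (hv : ∀ x, |v x| ≤ M) {x : X} {a : 𝔸} (ha : a ∈ A x) (z : W) :
    |c x a z + α * v (F x a z)| ≤ Mc + α * M := by
  refine (abs_add_le _ _).trans (add_le_add ?_ ?_)
  · rw [abs_of_nonneg (hcnn x a z ha)]
    exact hcbd x a z ha
  · rw [abs_mul, abs_of_pos hα0]
    exact mul_le_mul_of_nonneg_left (hv _) hα0.le

variable [MeasurableSpace W]

/-- The value of the state-action pair `(x, a)`: the expected one-step cost plus the discounted
expectation of `v` at the next state. -/
def bellmanQ (F : X → 𝔸 → W → X) (c : X → 𝔸 → W → ℝ) (α : ℝ) (μ : Measure W)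
    (v : X → ℝ) (x : X) (a : 𝔸) : ℝ :=
  ∫ z, (c x a z + α * v (F x a z)) ∂μ

lemma bellmanPhi_eq_sInf_image (A : X → Set 𝔸) (F : X → 𝔸 → W → X) (c : X → 𝔸 → W → ℝ) (α : ℝ)
    (μ : Measure W) (v : X → ℝ) (x : X) :
    bellmanPhi A F c α μ v x = sInf (bellmanQ F c α μ v x '' A x) := by
  unfold bellmanPhi bellmanQ
  congr 1
  ext r
  simp only [Set.mem_ofPred_eq, Set.mem_image, eq_comm]

lemma abs_bellmanQ_le {A : X → Set 𝔸} {F : X → 𝔸 → W → X} {c : X → 𝔸 → W → ℝ} {Mc α M : ℝ}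
    {v : X → ℝ} (hcbd : ∀ x a z, a ∈ A x → c x a z ≤ Mc) (hcnn : ∀ x a z, a ∈ A x → 0 ≤ c x a z)
    (hα0 : 0 < α) (hv : ∀ x, |v x| ≤ M) (μ : Measure W) [IsProbabilityMeasure μ]
    {x : X} {a : 𝔸} (ha : a ∈ A x) :
    |bellmanQ F c α μ v x a| ≤ Mc + α * M := by
  have h := norm_integral_le_of_norm_le_const (μ := μ) (C := Mc + α * M)
    (f := fun z => c x a z + α * v (F x a z))
    (Eventually.of_forall fun z => abs_integrand_le hcbd hcnn hα0 hv ha z)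
  simpa [bellmanQ] using h

lemma bddBelow_bellmanQ {A : X → Set 𝔸} {F : X → 𝔸 → W → X} {c : X → 𝔸 → W → ℝ} {Mc α M : ℝ}
    {v : X → ℝ} (hcbd : ∀ x a z, a ∈ A x → c x a z ≤ Mc) (hcnn : ∀ x a z, a ∈ A x → 0 ≤ c x a z)
    (hα0 : 0 < α) (hv : ∀ x, |v x| ≤ M) (μ : Measure W) [IsProbabilityMeasure μ] (x : X) :
    BddBelow (bellmanQ F c α μ v x '' A x) := by
  refine ⟨-(Mc + α * M), ?_⟩
  rintro _ ⟨a, ha, rfl⟩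
  exact (abs_le.1 (abs_bellmanQ_le hcbd hcnn hα0 hv μ ha)).1

lemma bellmanPhi_le_bellmanQ {A : X → Set 𝔸} {F : X → 𝔸 → W → X} {c : X → 𝔸 → W → ℝ} {Mc α M : ℝ}
    {v : X → ℝ} (hcbd : ∀ x a z, a ∈ A x → c x a z ≤ Mc) (hcnn : ∀ x a z, a ∈ A x → 0 ≤ c x a z)
    (hα0 : 0 < α) (hv : ∀ x, |v x| ≤ M) (μ : Measure W) [IsProbabilityMeasure μ]
    {x : X} {a : 𝔸} (ha : a ∈ A x) :
    bellmanPhi A F c α μ v x ≤ bellmanQ F c α μ v x a := by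
  rw [bellmanPhi_eq_sInf_image]
  exact csInf_le (bddBelow_bellmanQ hcbd hcnn hα0 hv μ x) ⟨a, ha, rfl⟩

lemma abs_bellmanPhi_le {A : X → Set 𝔸} (hAne : ∀ x, (A x).Nonempty)
    {F : X → 𝔸 → W → X} {c : X → 𝔸 → W → ℝ} {Mc α M : ℝ}
    {v : X → ℝ} (hcbd : ∀ x a z, a ∈ A x → c x a z ≤ Mc) (hcnn : ∀ x a z, a ∈ A x → 0 ≤ c x a z)
    (hα0 : 0 < α) (hv : ∀ x, |v x| ≤ M) (μ : Measure W) [IsProbabilityMeasure μ] (x : X) :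
    |bellmanPhi A F c α μ v x| ≤ Mc + α * M := by
  obtain ⟨a, ha⟩ := hAne x
  refine abs_le.2 ⟨?_, (bellmanPhi_le_bellmanQ hcbd hcnn hα0 hv μ ha).trans
    (abs_le.1 (abs_bellmanQ_le hcbd hcnn hα0 hv μ ha)).2⟩
  rw [bellmanPhi_eq_sInf_image]
  refine le_csInf ⟨_, a, ha, rfl⟩ ?_
  rintro _ ⟨b, hb, rfl⟩
  exact (abs_le.1 (abs_bellmanQ_le hcbd hcnn hα0 hv μ hb)).1

end Bellman

section BellmanTopology

variable {X 𝔸 W : Type*} [MetricSpace X] [MetricSpace 𝔸] [MetricSpace W]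
  {A : X → Set 𝔸} {F : X → 𝔸 → W → X} {c : X → 𝔸 → W → ℝ} {Mc α M : ℝ} {v : X → ℝ}

/-- At an admissible pair, a function continuous on the graph of `A` times `W` has a continuous
section in the noise variable. -/
lemma continuous_noise_section {Y : Type*} [TopologicalSpace Y] {g : X → 𝔸 → W → Y}
    (hg : ContinuousOn (fun p : X × 𝔸 × W => g p.1 p.2.1 p.2.2)
      {p : X × 𝔸 × W | p.2.1 ∈ A p.1}) {x : X} {a : 𝔸} (ha : a ∈ A x) :
    Continuous (g x a) :=
  hg.comp_continuous (f := fun z : W => (x, a, z)) (by fun_prop) fun _ => ha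

variable [MeasurableSpace X] [BorelSpace X] [MeasurableSpace W] [BorelSpace W]

/-- Measurability of `v` suffices for integrability, since each section `F x a` is continuous. -/
lemma integrable_integrand
    (hFcont : ContinuousOn (fun p : X × 𝔸 × W => F p.1 p.2.1 p.2.2)
      {p : X × 𝔸 × W | p.2.1 ∈ A p.1})
    (hccont : ContinuousOn (fun p : X × 𝔸 × W => c p.1 p.2.1 p.2.2)
      {p : X × 𝔸 × W | p.2.1 ∈ A p.1})
    (hcbd : ∀ x a z, a ∈ A x → c x a z ≤ Mc) (hcnn : ∀ x a z, a ∈ A x → 0 ≤ c x a z)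
    (hα0 : 0 < α) (hvm : Measurable v) (hv : ∀ x, |v x| ≤ M)
    (μ : Measure W) [IsProbabilityMeasure μ] {x : X} {a : 𝔸} (ha : a ∈ A x) :
    Integrable (fun z => c x a z + α * v (F x a z)) μ := by
  have hm : Measurable fun z => c x a z + α * v (F x a z) :=
    (continuous_noise_section hccont ha).measurable.add
      ((hvm.comp (continuous_noise_section hFcont ha).measurable).const_mul α)
  exact Integrable.of_bound hm.aestronglyMeasurable (Mc + α * M)
    (Eventually.of_forall fun z => abs_integrand_le hcbd hcnn hα0 hv ha z)

/-- Half of the contraction estimate; the other half is the same statement with `v` and `w`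
exchanged. -/
lemma bellmanPhi_le_add (hAne : ∀ x, (A x).Nonempty)
    (hFcont : ContinuousOn (fun p : X × 𝔸 × W => F p.1 p.2.1 p.2.2)
      {p : X × 𝔸 × W | p.2.1 ∈ A p.1})
    (hccont : ContinuousOn (fun p : X × 𝔸 × W => c p.1 p.2.1 p.2.2)
      {p : X × 𝔸 × W | p.2.1 ∈ A p.1})
    (hcbd : ∀ x a z, a ∈ A x → c x a z ≤ Mc) (hcnn : ∀ x a z, a ∈ A x → 0 ≤ c x a z)
    (hα0 : 0 < α) (hvm : Measurable v) (hv : ∀ x, |v x| ≤ M)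
    {w : X → ℝ} {N D : ℝ} (hwm : Measurable w) (hw : ∀ x, |w x| ≤ N)
    (hvw : ∀ x, v x ≤ w x + D)
    (μ : Measure W) [IsProbabilityMeasure μ] (x : X) :
    bellmanPhi A F c α μ v x ≤ bellmanPhi A F c α μ w x + α * D := by
  rw [← sub_le_iff_le_add, bellmanPhi_eq_sInf_image A F c α μ w]
  refine le_csInf ((hAne x).image _) ?_
  rintro _ ⟨a, ha, rfl⟩
  rw [sub_le_iff_le_add]
  refine (bellmanPhi_le_bellmanQ hcbd hcnn hα0 hv μ ha).trans ?_
  have hiw := integrable_integrand hFcont hccont hcbd hcnn hα0 hwm hw μ ha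
  have key : bellmanQ F c α μ v x a ≤ ∫ z, ((c x a z + α * w (F x a z)) + α * D) ∂μ := by
    refine integral_mono (integrable_integrand hFcont hccont hcbd hcnn hα0 hvm hv μ ha)
      (hiw.add (integrable_const _)) fun z => ?_
    have := mul_le_mul_of_nonneg_left (hvw (F x a z)) hα0.le
    simp only
    linarith
  rw [integral_add hiw (integrable_const _)] at key
  simpa [bellmanQ] using key

/-- Sequential continuity of the state-action value on the graph of `A`. -/
lemma tendsto_bellmanQ
    (hFcont : ContinuousOn (fun p : X × 𝔸 × W => F p.1 p.2.1 p.2.2)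
      {p : X × 𝔸 × W | p.2.1 ∈ A p.1})
    (hccont : ContinuousOn (fun p : X × 𝔸 × W => c p.1 p.2.1 p.2.2)
      {p : X × 𝔸 × W | p.2.1 ∈ A p.1})
    (hcbd : ∀ x a z, a ∈ A x → c x a z ≤ Mc) (hcnn : ∀ x a z, a ∈ A x → 0 ≤ c x a z)
    (hα0 : 0 < α) (hvc : Continuous v) (hv : ∀ x, |v x| ≤ M)
    (μ : Measure W) [IsProbabilityMeasure μ] {x : X} {a : 𝔸} (ha : a ∈ A x)
    {xk : ℕ → X} {ak : ℕ → 𝔸} (hak : ∀ k, ak k ∈ A (xk k))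
    (hx : Tendsto xk atTop (𝓝 x)) (hka : Tendsto ak atTop (𝓝 a)) :
    Tendsto (fun k => bellmanQ F c α μ v (xk k) (ak k)) atTop (𝓝 (bellmanQ F c α μ v x a)) := by
  refine tendsto_integral_of_dominated_convergence (fun _ => Mc + α * M)
    (fun k => (integrable_integrand hFcont hccont hcbd hcnn hα0
      hvc.measurable hv μ (hak k)).aestronglyMeasurable)
    (integrable_const _)
    (fun k => Eventually.of_forall fun z => abs_integrand_le hcbd hcnn hα0 hv (hak k) z)
    (Eventually.of_forall fun z => ?_)
  have hp : Tendsto (fun k => (xk k, ak k, z)) atTop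
      (𝓝[{p : X × 𝔸 × W | p.2.1 ∈ A p.1}] (x, a, z)) :=
    tendsto_nhdsWithin_iff.2 ⟨hx.prodMk_nhds (hka.prodMk_nhds tendsto_const_nhds),
      Eventually.of_forall hak⟩
  have hc := (hccont (x, a, z) ha).tendsto.comp hp
  have hF := (hvc.tendsto _).comp ((hFcont (x, a, z) ha).tendsto.comp hp)
  exact hc.add (hF.const_mul α)

lemma exists_bellmanPhi_eq (hAne : ∀ x, (A x).Nonempty) (hAcp : ∀ x, IsCompact (A x))
    (hFcont : ContinuousOn (fun p : X × 𝔸 × W => F p.1 p.2.1 p.2.2)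
      {p : X × 𝔸 × W | p.2.1 ∈ A p.1})
    (hccont : ContinuousOn (fun p : X × 𝔸 × W => c p.1 p.2.1 p.2.2)
      {p : X × 𝔸 × W | p.2.1 ∈ A p.1})
    (hcbd : ∀ x a z, a ∈ A x → c x a z ≤ Mc) (hcnn : ∀ x a z, a ∈ A x → 0 ≤ c x a z)
    (hα0 : 0 < α) (hvc : Continuous v) (hv : ∀ x, |v x| ≤ M)
    (μ : Measure W) [IsProbabilityMeasure μ] (x : X) :
    ∃ a ∈ A x, bellmanPhi A F c α μ v x = bellmanQ F c α μ v x a := by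
  have hcont : ContinuousOn (bellmanQ F c α μ v x) (A x) := by
    rw [continuousOn_iff_continuous_domRestrict, continuous_iff_seqContinuous]
    intro b a hb
    exact tendsto_bellmanQ hFcont hccont hcbd hcnn hα0 hvc hv μ a.2 (xk := fun _ => x)
      (ak := fun k => (b k : 𝔸)) (fun k => (b k).2) tendsto_const_nhds
      ((continuous_subtype_val.tendsto a).comp hb)
  obtain ⟨a, ha, h⟩ := (hAcp x).exists_sInf_image_eq (hAne x) hcont
  exact ⟨a, ha, by rw [bellmanPhi_eq_sInf_image, h]⟩

/-- Berge's maximum theorem for the Bellman operator. -/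
lemma continuous_bellmanPhi (hAne : ∀ x, (A x).Nonempty) (hAcp : ∀ x, IsCompact (A x))
    (hAuhc : UpperHemicontinuousSeq A) (hAlhc : LowerHemicontinuousSeq A)
    (hFcont : ContinuousOn (fun p : X × 𝔸 × W => F p.1 p.2.1 p.2.2)
      {p : X × 𝔸 × W | p.2.1 ∈ A p.1})
    (hccont : ContinuousOn (fun p : X × 𝔸 × W => c p.1 p.2.1 p.2.2)
      {p : X × 𝔸 × W | p.2.1 ∈ A p.1})
    (hcbd : ∀ x a z, a ∈ A x → c x a z ≤ Mc) (hcnn : ∀ x a z, a ∈ A x → 0 ≤ c x a z)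
    (hα0 : 0 < α) (hvc : Continuous v) (hv : ∀ x, |v x| ≤ M)
    (μ : Measure W) [IsProbabilityMeasure μ] :
    Continuous (bellmanPhi A F c α μ v) := by
  have hmin := exists_bellmanPhi_eq hAne hAcp hFcont hccont hcbd hcnn hα0 hvc hv μ
  rw [continuous_iff_seqContinuous]
  intro xk x hx
  -- Every subsequence `xk ∘ ns` has a further subsequence along which the values converge.
  refine tendsto_of_subseq_tendsto fun ns hns => ?_
  have hy : Tendsto (fun k => xk (ns k)) atTop (𝓝 x) := hx.comp hns
  choose b hb hbeq using fun k => hmin (xk (ns k))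
  obtain ⟨a, ha, φ, hφ, hφa⟩ := hAuhc x _ b hy hb
  have hyφ : Tendsto (fun k => xk (ns (φ k))) atTop (𝓝 x) := hy.comp hφ.tendsto_atTop
  have h1 : Tendsto (fun k => bellmanPhi A F c α μ v (xk (ns (φ k)))) atTop
      (𝓝 (bellmanQ F c α μ v x a)) := by
    simp only [hbeq]
    exact tendsto_bellmanQ hFcont hccont hcbd hcnn hα0 hvc hv μ ha
      (fun k => hb (φ k)) hyφ hφa
  refine ⟨φ, ?_⟩
  -- The limit action `a` is optimal at `x`: compare with actions approximating a minimizer there.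
  obtain ⟨a', ha', ha'eq⟩ := hmin x
  obtain ⟨ψ, hψ, d, hd, hda⟩ := hAlhc x _ hyφ a' ha'
  have h2 := tendsto_bellmanQ hFcont hccont hcbd hcnn hα0 hvc hv μ ha' hd
    (hyφ.comp hψ.tendsto_atTop) hda
  have hle : bellmanQ F c α μ v x a ≤ bellmanPhi A F c α μ v x := by
    rw [ha'eq]
    exact le_of_tendsto_of_tendsto' (h1.comp hψ.tendsto_atTop) h2
      fun m => bellmanPhi_le_bellmanQ hcbd hcnn hα0 hv μ (hd m)
  rwa [le_antisymm hle (bellmanPhi_le_bellmanQ hcbd hcnn hα0 hv μ ha)] at h1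

end BellmanTopology

/-- Lemma C.1: under the general MDP assumptions, (a) the Bellman iterates of a continuous
bounded function are continuous and bounded, and (b) any bounded measurable fixed point `J*`
of `Φ` is continuous with `‖J*‖_∞ ≤ ‖c‖_∞/(1−α)`. -/
theorem stmt_4 {X 𝔸 W : Type*}
    [MetricSpace X] [TopologicalSpace.SeparableSpace X] [MeasurableSpace X] [BorelSpace X]
    [MetricSpace 𝔸] [TopologicalSpace.SeparableSpace 𝔸] [MeasurableSpace 𝔸] [BorelSpace 𝔸]
    [MetricSpace W] [TopologicalSpace.SeparableSpace W] [MeasurableSpace W] [BorelSpace W]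
    (A : X → Set 𝔸)
    (hAne : ∀ x, (A x).Nonempty) (hAcp : ∀ x, IsCompact (A x))
    (hAuhc : UpperHemicontinuousSeq A) (hAlhc : LowerHemicontinuousSeq A)
    (hAgraph : MeasurableSet {p : X × 𝔸 | p.2 ∈ A p.1})
    (F : X → 𝔸 → W → X)
    (hFcont : ContinuousOn (fun p : X × 𝔸 × W => F p.1 p.2.1 p.2.2)
      {p : X × 𝔸 × W | p.2.1 ∈ A p.1})
    (c : X → 𝔸 → W → ℝ)
    (hccont : ContinuousOn (fun p : X × 𝔸 × W => c p.1 p.2.1 p.2.2)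
      {p : X × 𝔸 × W | p.2.1 ∈ A p.1})
    (Mc : ℝ) (hcbd : ∀ x a z, a ∈ A x → c x a z ≤ Mc)
    (hcnn : ∀ x a z, a ∈ A x → 0 ≤ c x a z)
    (α : ℝ) (hα0 : 0 < α) (hα1 : α < 1)
    (μ : Measure W) [IsProbabilityMeasure μ] :
    (∀ v : X → ℝ, Continuous v → (∃ M, ∀ x, |v x| ≤ M) → ∀ t : ℕ, 1 ≤ t →
      Continuous ((bellmanPhi A F c α μ)^[t] v) ∧
      ∃ M, ∀ x, |(bellmanPhi A F c α μ)^[t] v x| ≤ M) ∧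
    (∀ J : X → ℝ, Measurable J → (∃ M, ∀ x, |J x| ≤ M) →
      bellmanPhi A F c α μ J = J →
      Continuous J ∧ ∀ x, |J x| ≤ Mc / (1 - α)) := by
  have hstep : ∀ v : X → ℝ, Continuous v → (∃ M, ∀ x, |v x| ≤ M) → ∀ t : ℕ,
      Continuous ((bellmanPhi A F c α μ)^[t] v) ∧
      ∃ M, ∀ x, |(bellmanPhi A F c α μ)^[t] v x| ≤ M := by
    intro v hvc hv t
    induction t with
    | zero => exact ⟨hvc, hv⟩
    | succ t ih =>
      obtain ⟨hc, M, hM⟩ := ih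
      rw [Function.iterate_succ_apply']
      exact ⟨continuous_bellmanPhi hAne hAcp hAuhc hAlhc hFcont hccont hcbd hcnn hα0 hc hM μ,
        _, abs_bellmanPhi_le hAne hcbd hcnn hα0 hM μ⟩
  refine ⟨fun v hvc hv t _ => hstep v hvc hv t, ?_⟩
  rintro J hJm ⟨M, hM⟩ hfix
  constructor
  · have h0 := hstep (fun _ => 0) continuous_const ⟨0, fun x => by simp⟩
    have hdist : ∀ (t : ℕ) (x : X),
        |J x - (bellmanPhi A F c α μ)^[t] (fun _ => 0) x| ≤ α ^ t * M := by
      intro t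
      induction t with
      | zero => simpa using hM
      | succ t ih =>
        obtain ⟨hc, N, hN⟩ := h0 t
        intro x
        have h1 := bellmanPhi_le_add hAne hFcont hccont hcbd hcnn hα0 hJm hM hc.measurable hN
          (D := α ^ t * M) (fun y => by linarith [(abs_le.1 (ih y)).2]) μ x
        have h2 := bellmanPhi_le_add hAne hFcont hccont hcbd hcnn hα0 hc.measurable hN hJm hM
          (D := α ^ t * M) (fun y => by linarith [(abs_le.1 (ih y)).1]) μ x
        rw [hfix] at h1 h2
        rw [Function.iterate_succ_apply', pow_succ', mul_assoc, abs_le]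
        constructor <;> linarith
    have hlim : Tendsto (fun t : ℕ => α ^ t * M) atTop (𝓝 0) := by
      simpa using (tendsto_pow_atTop_nhds_zero_of_lt_one hα0.le hα1).mul_const M
    have hunif : TendstoUniformly (fun t : ℕ => (bellmanPhi A F c α μ)^[t] (fun _ => 0)) J
        atTop := by
      rw [Metric.tendstoUniformly_iff]
      intro ε hε
      filter_upwards [hlim.eventually_lt_const hε] with t ht x
      exact (hdist t x).trans_lt ht
    exact hunif.continuous (Frequently.of_forall fun t => (h0 t).1)
  · intro x
    have : Nonempty X := ⟨x⟩
    have hbdd : BddAbove (Set.range fun y => |J y|) := ⟨M, by rintro _ ⟨y, rfl⟩; exact hM y⟩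
    have hS : ∀ y, |J y| ≤ ⨆ y, |J y| := le_ciSup hbdd
    have hle : (⨆ y, |J y|) ≤ Mc + α * ⨆ y, |J y| := by
      refine ciSup_le fun y => ?_
      have := abs_bellmanPhi_le hAne hcbd hcnn hα0 hS μ (F := F) y
      rwa [hfix] at this
    refine (hS x).trans ?_
    rw [le_div_iff₀ (by linarith)]
    linarith
end
end

section
/- Adopt the general measurable MDP data. Let P be a nonempty set of Borel probability measures on W with μ ∈ P. Let π : X → A be measurable, let J̃ : X → ℝ be bounded measurable satisfying the robust Bellman equation for π: J̃(x) = sup_{ν ∈ P} ∫_W (c(x, π(x), z) + α J̃(F(x, π(x), z))) ν(dz) for all x ∈ X, and let v : X → ℝ be bounded measurable satisfying the policy-evaluation fixed-point equation v(x) = ∫_W (c(x, π(x), z) + α v(F(x, π(x), z))) μ(dz) for all x ∈ X (so v is the value of the policy π under the true distribution μ). Then v(x) ≤ J̃(x) for all x ∈ X. (Proposition 3.1: if the true distribution lies in the ambiguity set, the robust optimal value function upper-bounds the out-of-sample value function.) -/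
/-!
The policy operators satisfy `v = T_μ v` and `J = sup_ν T_ν J ≥ T_μ J`, because `μ` lies in the
ambiguity set and the family `T_ν J x` is bounded above. Hence `v - J ≤ T_μ v - T_μ J`, which is
`α` times the `μ`-average of `v - J` along the transition. Writing `s` for the finite supremum
of `v - J`, this gives `s ≤ α * s`, so `s ≤ 0` since `α < 1`.
-/

open MeasureTheory Filter Topology
open scoped ENNReal NNReal

noncomputable section

/-- Proposition 3.1: if the true disturbance distribution `μ` belongs to the ambiguity set `P`,
then the value `v` of a policy `π` under `μ` (the out-of-sample value function) is bounded above
by the robust value `J̃` of `π` over `P`. -/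
theorem stmt_8 {X A W : Type*}
    [MeasurableSpace X] [StandardBorelSpace X]
    [MeasurableSpace A] [StandardBorelSpace A]
    [MeasurableSpace W] [StandardBorelSpace W]
    (c : X → A → W → ℝ)
    (hcmeas : Measurable (fun p : X × A × W => c p.1 p.2.1 p.2.2))
    (Mc : ℝ) (hcbd : ∀ x a z, c x a z ≤ Mc) (hcnn : ∀ x a z, 0 ≤ c x a z)
    (F : X → A → W → X)
    (hFmeas : Measurable (fun p : X × A × W => F p.1 p.2.1 p.2.2))
    (α : ℝ) (hα0 : 0 < α) (hα1 : α < 1)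
    (μ : Measure W) [IsProbabilityMeasure μ]
    (P : Set (Measure W)) (hPprob : ∀ ν ∈ P, IsProbabilityMeasure ν) (hμP : μ ∈ P)
    (π : X → A) (hπmeas : Measurable π)
    (Jrob : X → ℝ) (hJmeas : Measurable Jrob) (hJbd : ∃ M, ∀ x, |Jrob x| ≤ M)
    (hJfix : ∀ x, Jrob x = sSup {r : ℝ | ∃ ν ∈ P,
      r = ∫ z, (c x (π x) z + α * Jrob (F x (π x) z)) ∂ν})
    (v : X → ℝ) (hvmeas : Measurable v) (hvbd : ∃ M, ∀ x, |v x| ≤ M)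
    (hvfix : ∀ x, v x = ∫ z, (c x (π x) z + α * v (F x (π x) z)) ∂μ) :
    ∀ x, v x ≤ Jrob x := by
  obtain ⟨MJ, hMJ⟩ := hJbd
  obtain ⟨Mv, hMv⟩ := hvbd
  have hFx : ∀ x, Measurable (fun z => F x (π x) z) := fun x =>
    hFmeas.comp (measurable_const.prodMk (measurable_const.prodMk measurable_id))
  have hcx : ∀ x, Measurable (fun z => c x (π x) z) := fun x =>
    hcmeas.comp (measurable_const.prodMk (measurable_const.prodMk measurable_id))
  have hint : ∀ (g : X → ℝ) (M : ℝ), Measurable g → (∀ y, |g y| ≤ M) →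
      ∀ (ν : Measure W) [IsProbabilityMeasure ν] (x : X),
        Integrable (fun z => c x (π x) z + α * g (F x (π x) z)) ν := by
    intro g M hg hM ν _ x
    refine Integrable.add ?_ (Integrable.const_mul ?_ α)
    · refine Integrable.of_bound (hcx x).aestronglyMeasurable Mc (ae_of_all _ fun z => ?_)
      rw [Real.norm_eq_abs, abs_of_nonneg (hcnn _ _ _)]
      exact hcbd _ _ _
    · exact Integrable.of_bound (hg.comp (hFx x)).aestronglyMeasurable M
        (ae_of_all _ fun z => hM _)
  -- `sSup` of an unbounded set of reals is `0`, so boundedness is needed to use `μ ∈ P`.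
  have hJge : ∀ x, ∫ z, (c x (π x) z + α * Jrob (F x (π x) z)) ∂μ ≤ Jrob x := by
    intro x
    rw [hJfix x]
    refine le_csSup ⟨Mc + α * MJ, ?_⟩ ⟨μ, hμP, rfl⟩
    rintro r ⟨ν, hν, rfl⟩
    haveI := hPprob ν hν
    calc ∫ z, (c x (π x) z + α * Jrob (F x (π x) z)) ∂ν
        ≤ ∫ _, (Mc + α * MJ) ∂ν := by
          refine integral_mono (hint Jrob MJ hJmeas hMJ ν x) (integrable_const _) fun z => ?_
          exact add_le_add (hcbd _ _ _)
            (mul_le_mul_of_nonneg_left ((le_abs_self _).trans (hMJ _)) hα0.le)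
      _ = Mc + α * MJ := by simp
  have hstep : ∀ K, (∀ y, v y - Jrob y ≤ K) → ∀ x, v x - Jrob x ≤ α * K := by
    intro K hK x
    have h : v x ≤ ∫ z, ((c x (π x) z + α * Jrob (F x (π x) z)) + α * K) ∂μ := by
      rw [hvfix x]
      refine integral_mono (hint v Mv hvmeas hMv μ x)
        ((hint Jrob MJ hJmeas hMJ μ x).add (integrable_const _)) fun z => ?_
      have := mul_le_mul_of_nonneg_left (hK (F x (π x) z)) hα0.le
      dsimp only
      linarith
    rw [integral_add (hint Jrob MJ hJmeas hMJ μ x) (integrable_const _)] at h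
    simp only [integral_const, probReal_univ, one_smul] at h
    linarith [hJge x]
  intro x
  haveI : Nonempty X := ⟨x⟩
  have hbdd : BddAbove (Set.range fun y => v y - Jrob y) := by
    refine ⟨Mv + MJ, ?_⟩
    rintro _ ⟨y, rfl⟩
    have h1 := abs_le.mp (hMv y)
    have h2 := abs_le.mp (hMJ y)
    dsimp only
    linarith
  have hle : ∀ y, v y - Jrob y ≤ ⨆ y, (v y - Jrob y) := fun y => le_ciSup hbdd y
  have hs : (⨆ y, (v y - Jrob y)) ≤ α * ⨆ y, (v y - Jrob y) := ciSup_le (hstep _ hle)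
  have hs0 : (⨆ y, (v y - Jrob y)) ≤ 0 := by nlinarith
  linarith [hle x]
end
end

section
/- Adopt the general measurable MDP data. Fix N ≥ 1, γ ∈ (0,1), ε > 0, and let d be any function on pairs of Borel probability measures on W with values in [0,∞]. For (w₁,…,w_N) ∈ W^N write μ̂^N = (1/N)∑_{i=1}^N δ_{w_i} and P(w₁,…,w_N) = { ν : d(ν, μ̂^N) ≤ ε }. Suppose the set E = { (w₁,…,w_N) ∈ W^N : d(μ, μ̂^N) ≤ ε } is μ^⊗N-measurable with μ^⊗N(E) ≥ 1 − γ. Then for every (w₁,…,w_N) ∈ E the following holds: for every measurable π : X → A, every bounded measurable J̃ : X → ℝ with J̃(x) = sup_{ν ∈ P(w₁,…,w_N)} ∫_W (c(x,π(x),z) + α J̃(F(x,π(x),z))) ν(dz) for all x, and every bounded measurable v : X → ℝ with v(x) = ∫_W (c(x,π(x),z) + α v(F(x,π(x),z))) μ(dz) for all x, one has v(x) ≤ J̃(x) for all x ∈ X. Consequently, with μ^⊗N-probability at least 1 − γ, the out-of-sample value function is bounded above by the robust optimal value function simultaneously at every state. (Theorem 3.3.) -/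
/-!
For a sample in `E`, the true law `μ` itself belongs to the ambiguity set, so the robust value
dominates its own one-step Bellman operator under `μ`: `J ≥ T_μ J`. The out-of-sample value
satisfies `v = T_μ v`. Since `T_μ` is monotone and `T_μ (J + S) = T_μ J + α S` for constants `S`,
taking `S = sup (v - J)` gives `v ≤ T_μ (J + S) ≤ J + α S`, hence `S ≤ α S` and `S ≤ 0`.
The probability bound follows by monotonicity of the product measure.
-/

open MeasureTheory Filter Topology
open scoped ENNReal NNReal

noncomputable section

/-- The empirical distribution `μ̂^N = (1/N) ∑_{i=1}^N δ_{w_i}` of a sample `w ∈ W^N`. -/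
def empiricalMeasureFin {W : Type*} [MeasurableSpace W] {N : ℕ} (w : Fin N → W) : Measure W :=
  (N : ℝ≥0∞)⁻¹ • ∑ i : Fin N, Measure.dirac (w i)

/-- The per-realization conclusion of Theorem 3.3: for the ambiguity set
`P = {ν : d(ν, μ̂^N) ≤ ε}` built from the sample `w`, every robust value function `J̃` of a
policy `π` upper-bounds the corresponding out-of-sample value function `v` at every state. -/
def OOSUpperBound {X A W : Type*} [MeasurableSpace X] [MeasurableSpace A] [MeasurableSpace W]
    (c : X → A → W → ℝ) (F : X → A → W → X) (α : ℝ) (μ : Measure W)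
    (d : Measure W → Measure W → ℝ≥0∞) (ε : ℝ≥0∞) {N : ℕ} (w : Fin N → W) : Prop :=
  ∀ π : X → A, Measurable π →
    ∀ Jrob : X → ℝ, Measurable Jrob → (∃ M, ∀ x, |Jrob x| ≤ M) →
      (∀ x, Jrob x = sSup {r : ℝ | ∃ ν ∈ {ν : Measure W | IsProbabilityMeasure ν ∧
          d ν (empiricalMeasureFin w) ≤ ε},
        r = ∫ z, (c x (π x) z + α * Jrob (F x (π x) z)) ∂ν}) →
    ∀ v : X → ℝ, Measurable v → (∃ M, ∀ x, |v x| ≤ M) →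
      (∀ x, v x = ∫ z, (c x (π x) z + α * v (F x (π x) z)) ∂μ) →
    ∀ x, v x ≤ Jrob x

/-- The one-step Bellman integrand is bounded and measurable, hence integrable for every
probability law of the disturbance. -/
lemma bellman_integrable {X A W : Type*}
    [MeasurableSpace X] [MeasurableSpace A] [MeasurableSpace W]
    {c : X → A → W → ℝ} (hcmeas : Measurable (fun p : X × A × W => c p.1 p.2.1 p.2.2))
    {Mc : ℝ} (hcbd : ∀ x a z, c x a z ≤ Mc) (hcnn : ∀ x a z, 0 ≤ c x a z)
    {F : X → A → W → X} (hFmeas : Measurable (fun p : X × A × W => F p.1 p.2.1 p.2.2))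
    {α : ℝ} (hα0 : 0 < α) {u : X → ℝ} (hu : Measurable u) {M : ℝ} (hM : ∀ x, |u x| ≤ M)
    (ν : Measure W) [IsProbabilityMeasure ν] (x : X) (a : A) :
    Integrable (fun z => c x a z + α * u (F x a z)) ν := by
  have hsec : Measurable (fun z : W => (x, a, z)) := by fun_prop
  have hmeas : Measurable (fun z => c x a z + α * u (F x a z)) :=
    (hcmeas.comp hsec).add ((hu.comp (hFmeas.comp hsec)).const_mul α)
  refine Integrable.of_bound hmeas.aestronglyMeasurable (Mc + α * M) (ae_of_all _ fun z => ?_)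
  refine (norm_add_le _ _).trans (add_le_add ?_ ?_)
  · rw [Real.norm_eq_abs, abs_of_nonneg (hcnn x a z)]
    exact hcbd x a z
  · rw [Real.norm_eq_abs, abs_mul, abs_of_pos hα0]
    exact mul_le_mul_of_nonneg_left (hM _) hα0.le

/-- Comparison for the policy Bellman equation under `ν`: a bounded fixed point `v` lies below
every bounded supersolution `J`. -/
lemma fixedPoint_le_supersolution {X A W : Type*}
    [MeasurableSpace X] [MeasurableSpace A] [MeasurableSpace W]
    {c : X → A → W → ℝ} (hcmeas : Measurable (fun p : X × A × W => c p.1 p.2.1 p.2.2))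
    {Mc : ℝ} (hcbd : ∀ x a z, c x a z ≤ Mc) (hcnn : ∀ x a z, 0 ≤ c x a z)
    {F : X → A → W → X} (hFmeas : Measurable (fun p : X × A × W => F p.1 p.2.1 p.2.2))
    {α : ℝ} (hα0 : 0 < α) (hα1 : α < 1) (ν : Measure W) [IsProbabilityMeasure ν] (π : X → A)
    {J : X → ℝ} (hJ : Measurable J) {MJ : ℝ} (hMJ : ∀ x, |J x| ≤ MJ)
    (hJsuper : ∀ x, ∫ z, (c x (π x) z + α * J (F x (π x) z)) ∂ν ≤ J x)
    {v : X → ℝ} (hv : Measurable v) {Mv : ℝ} (hMv : ∀ x, |v x| ≤ Mv)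
    (hvfix : ∀ x, v x = ∫ z, (c x (π x) z + α * v (F x (π x) z)) ∂ν) (x : X) :
    v x ≤ J x := by
  have : Nonempty X := ⟨x⟩
  have hbdd : BddAbove (Set.range fun y => v y - J y) := by
    refine ⟨Mv + MJ, ?_⟩
    rintro _ ⟨y, rfl⟩
    have h1 := (abs_le.1 (hMv y)).2
    have h2 := (abs_le.1 (hMJ y)).1
    simp only
    linarith
  set S := ⨆ y, (v y - J y) with hS
  have hle : ∀ y, v y - J y ≤ S := fun y => le_ciSup hbdd y
  have hstep : S ≤ α * S := by
    refine ciSup_le fun y => ?_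
    have hiv := bellman_integrable hcmeas hcbd hcnn hFmeas hα0 hv hMv ν y (π y)
    have hiJ := bellman_integrable hcmeas hcbd hcnn hFmeas hα0 hJ hMJ ν y (π y)
    have hmono : ∫ z, (c y (π y) z + α * v (F y (π y) z)) ∂ν
        ≤ ∫ z, ((c y (π y) z + α * J (F y (π y) z)) + α * S) ∂ν := by
      refine integral_mono hiv (hiJ.add (integrable_const _)) fun z => ?_
      have := mul_le_mul_of_nonneg_left (hle (F y (π y) z)) hα0.le
      simp only
      linarith
    rw [integral_add hiJ (integrable_const _), ← hvfix y] at hmono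
    simp only [integral_const, probReal_univ, one_smul] at hmono
    linarith [hJsuper y]
  have hS0 : S ≤ 0 := by nlinarith
  linarith [hle x]

/-- Theorem 3.3: if the event `E = {w ∈ W^N : d(μ, μ̂^N) ≤ ε}` has `μ^⊗N`-probability at least
`1 − γ`, then on `E` the robust optimal value function upper-bounds the out-of-sample value
function at every state; consequently this happens with probability at least `1 − γ`. -/
theorem stmt_11 {X A W : Type*}
    [MeasurableSpace X] [StandardBorelSpace X]
    [MeasurableSpace A] [StandardBorelSpace A]
    [MeasurableSpace W] [StandardBorelSpace W]
    (c : X → A → W → ℝ)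
    (hcmeas : Measurable (fun p : X × A × W => c p.1 p.2.1 p.2.2))
    (Mc : ℝ) (hcbd : ∀ x a z, c x a z ≤ Mc) (hcnn : ∀ x a z, 0 ≤ c x a z)
    (F : X → A → W → X)
    (hFmeas : Measurable (fun p : X × A × W => F p.1 p.2.1 p.2.2))
    (α : ℝ) (hα0 : 0 < α) (hα1 : α < 1)
    (μ : Measure W) [IsProbabilityMeasure μ]
    (N : ℕ) (hN : 1 ≤ N) (γ : ℝ) (hγ0 : 0 < γ) (hγ1 : γ < 1)
    (ε : ℝ≥0∞) (hε : 0 < ε)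
    (d : Measure W → Measure W → ℝ≥0∞)
    (E : Set (Fin N → W))
    (hE : E = {w : Fin N → W | d μ (empiricalMeasureFin w) ≤ ε})
    (hEmeas : MeasurableSet E)
    (hEprob : ENNReal.ofReal (1 - γ) ≤ Measure.pi (fun _ : Fin N => μ) E) :
    (∀ w ∈ E, OOSUpperBound c F α μ d ε w) ∧
    ENNReal.ofReal (1 - γ) ≤ Measure.pi (fun _ : Fin N => μ)
      {w : Fin N → W | OOSUpperBound c F α μ d ε w} := by
  have hmain : ∀ w ∈ E, OOSUpperBound c F α μ d ε w := by
    intro w hw π _ J hJ ⟨MJ, hMJ⟩ hJeq v hv ⟨Mv, hMv⟩ hveq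
    rw [hE] at hw
    refine fixedPoint_le_supersolution hcmeas hcbd hcnn hFmeas hα0 hα1 μ π hJ hMJ (fun x => ?_)
      hv hMv hveq
    -- `sSup` in `ℝ` is a genuine supremum here only because the set is bounded above.
    refine le_of_le_of_eq ?_ (hJeq x).symm
    refine le_csSup ⟨Mc + α * MJ, ?_⟩ ⟨μ, ⟨inferInstance, hw⟩, rfl⟩
    rintro _ ⟨ν, ⟨hν, -⟩, rfl⟩
    have hi := bellman_integrable hcmeas hcbd hcnn hFmeas hα0 hJ hMJ ν x (π x)
    calc ∫ z, (c x (π x) z + α * J (F x (π x) z)) ∂ν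
        ≤ ∫ _, (Mc + α * MJ) ∂ν := by
          refine integral_mono hi (integrable_const _) fun z => add_le_add (hcbd _ _ _) ?_
          exact mul_le_mul_of_nonneg_left (abs_le.1 (hMJ _)).2 hα0.le
      _ = Mc + α * MJ := by simp
  exact ⟨hmain, hEprob.trans (measure_mono hmain)⟩
end
end

section
/- For N ∈ ℕ, N ≥ 1, let S(N) = (∑_{i=0}^{⌊N/2⌋} C(N,i)) / 2^N, where C(N,i) is the binomial coefficient. Then S is strictly decreasing along even arguments, i.e., S(N+2) < S(N) for every even N ≥ 2, and 1/2 < S(N) < 3/4 for every even N ≥ 4. (Part of Theorem 4.1(b): the probability that the empirical optimal value function upper-bounds the out-of-sample value is decreasing over even sample-sizes and lies in (0.5, 0.75) for even N ≠ 2.) -/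
/-!
By Pascal's rule the lower half of row `2m + 1` of Pascal's triangle, whose sum is `4 ^ m`,
is twice the lower half of row `2m` (middle included) minus the middle entry. Hence
`S (2m) = 1/2 + centralBinom m / (2 * 4 ^ m)`. Since
`(m + 1) * centralBinom (m + 1) = 2 * (2m + 1) * centralBinom m`, the second summand is multiplied
by `(2m + 1) / (2m + 2) < 1` when `m` increases by one, so `m ↦ S (2m)` is strictly decreasing.
It stays above `1/2`, and `S 2 = 3/4` is the upper bound for `m ≥ 2`.
-/

open Finset

noncomputable section

/-- `S N = (∑_{i=0}^{⌊N/2⌋} C(N,i)) / 2^N`, the probability that `N` i.i.d. Bernoulli(1/2)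
random variables have sum at most `N/2`. -/
def S (N : ℕ) : ℚ := (∑ i ∈ Finset.range (N / 2 + 1), (N.choose i : ℚ)) / 2 ^ N

theorem two_mul_sum_choose (m : ℕ) :
    2 * ∑ i ∈ Finset.range (m + 1), (2 * m).choose i = 4 ^ m + m.centralBinom := by
  have h := Nat.sum_range_choose_halfway m
  rw [Finset.sum_range_succ'] at h
  simp only [Nat.choose_succ_succ', Finset.sum_add_distrib, Nat.choose_zero_right] at h
  have h1 := Finset.sum_range_succ (fun i => (2 * m).choose i) m
  have h2 := Finset.sum_range_succ' (fun i => (2 * m).choose i) m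
  simp only [Nat.choose_zero_right] at h2
  rw [Nat.centralBinom_eq_two_mul_choose]
  omega

theorem S_two_mul (m : ℕ) : S (2 * m) = 1 / 2 + (m.centralBinom : ℚ) / (2 * 4 ^ m) := by
  have h : 2 * ∑ i ∈ Finset.range (m + 1), ((2 * m).choose i : ℚ) = 4 ^ m + m.centralBinom := by
    exact_mod_cast two_mul_sum_choose m
  have h4 : (2 : ℚ) ^ (2 * m) = 4 ^ m := by rw [pow_mul]; norm_num
  unfold S
  rw [Nat.mul_div_cancel_left m (by norm_num), h4]
  field_simp
  linarith

theorem S_two_mul_strictAnti : StrictAnti fun m : ℕ => S (2 * m) := by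
  refine strictAnti_nat_of_succ_lt fun m => ?_
  have hrec : ((m : ℚ) + 1) * (m + 1).centralBinom = 2 * (2 * m + 1) * m.centralBinom := by
    exact_mod_cast Nat.succ_mul_centralBinom_succ m
  have hpos : (0 : ℚ) < m.centralBinom := by exact_mod_cast m.centralBinom_pos
  have hlt : ((m + 1).centralBinom : ℚ) < 4 * m.centralBinom := by
    have hm : (0 : ℚ) < (m : ℚ) + 1 := by positivity
    refine lt_of_mul_lt_mul_left ?_ hm.le
    rw [hrec]
    linarith
  rw [S_two_mul, S_two_mul, pow_succ, add_lt_add_iff_left, div_lt_div_iff₀ (by positivity)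
    (by positivity)]
  have h4 : (0 : ℚ) < 2 * 4 ^ m := by positivity
  nlinarith [mul_lt_mul_of_pos_right hlt h4]

/-- Part of Theorem 4.1(b): `S` is strictly decreasing along even arguments `N ≥ 2`,
and `1/2 < S N < 3/4` for every even `N ≥ 4`. -/
theorem stmt_16 :
    (∀ N : ℕ, 2 ≤ N → Even N → S (N + 2) < S N) ∧
    (∀ N : ℕ, 4 ≤ N → Even N → 1 / 2 < S N ∧ S N < 3 / 4) := by
  refine ⟨fun N _ hN => ?_, fun N h4 hN => ?_⟩
  · obtain ⟨m, rfl⟩ := hN.two_dvd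
    have h : S (2 * (m + 1)) < S (2 * m) := S_two_mul_strictAnti (Nat.lt_succ_self m)
    rwa [mul_add, mul_one] at h
  · obtain ⟨m, rfl⟩ := hN.two_dvd
    constructor
    · have hpos : (0 : ℚ) < m.centralBinom := by exact_mod_cast m.centralBinom_pos
      rw [S_two_mul]
      exact lt_add_of_pos_right _ (by positivity)
    · have h1 : S (2 * 1) = 3 / 4 := by
        rw [S_two_mul, Nat.centralBinom_eq_two_mul_choose]
        norm_num
      rw [← h1]
      exact S_two_mul_strictAnti (show 1 < m by omega)
end
end

section
/- Let (W, ρ) be a separable metric space, μ, ν Borel probability measures on W, and θ a Borel probability measure on W × W whose first and second marginals are μ and ν respectively (a coupling of μ and ν). Then the Lévy–Prokhorov distance satisfies d_Prokhorov(μ,ν) ≤ √((3/2)·∫_{W×W} ρ(z₁,z₂) θ(d(z₁,z₂))). In particular, taking the infimum over couplings, d_Prokhorov(μ,ν) ≤ √((3/2)·d_Wasserstein(μ,ν)), where d_Wasserstein(μ,ν) = inf_θ ∫ ρ(z₁,z₂) dθ over all couplings θ of μ and ν. (Section 6.7: the Prokhorov metric is bounded by the square root of 3/2 times the 1-Wasserstein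 distance.) -/
/-!
The constant `3 / 2` is not needed: the squared Lévy–Prokhorov distance is at most the transport
cost `I` of any coupling `θ`. If `0 < c` and `I ≤ c ^ 2`, Markov's inequality gives
`θ {ρ ≥ c} ≤ I / c ≤ c`, and off this set a pair with first coordinate in `B` has its second
coordinate in the `c`-thickening of `B`; hence `μ B ≤ ν (thickening c B) + c`, and symmetrically.
So every `c` above `√I` bounds the distance.
-/

open MeasureTheory Filter Topology
open scoped ENNReal NNReal

noncomputable section

/-- The 1-Wasserstein distance between two Borel probability measures, as the infimum of the
transport cost `∫ dist(z₁,z₂) dθ` over all couplings `θ` of `μ` and `ν` (extended real valued). -/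
def wassersteinDist {W : Type*} [MetricSpace W] [MeasurableSpace W]
    (μ ν : Measure W) : ℝ≥0∞ :=
  ⨅ θ : {θ : Measure (W × W) // IsProbabilityMeasure θ ∧
      θ.map Prod.fst = μ ∧ θ.map Prod.snd = ν},
    ∫⁻ p, edist p.1 p.2 ∂(θ : Measure (W × W))

/-- Markov's inequality for the cost of a coupling. -/
lemma coupling_meas_le {W : Type*} [MetricSpace W] [TopologicalSpace.SeparableSpace W]
    [MeasurableSpace W] [BorelSpace W] (θ : Measure (W × W)) {c : ℝ≥0∞}
    (h0 : c ≠ 0) (htop : c ≠ ∞) (hI : ∫⁻ p, edist p.1 p.2 ∂θ ≤ c ^ 2) :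
    θ {p | c ≤ edist p.1 p.2} ≤ c := by
  -- separability makes the distance measurable for the product σ-algebra
  have : SecondCountableTopology W := UniformSpace.secondCountable_of_separable W
  have hm : Measurable fun p : W × W => edist p.1 p.2 := measurable_edist
  have h := (mul_meas_ge_le_lintegral hm c (μ := θ)).trans hI
  rw [sq] at h
  exact (ENNReal.mul_le_mul_iff_right h0 htop).1 h

lemma levyProkhorovEDist_le_of_coupling {W : Type*} [MetricSpace W]
    [TopologicalSpace.SeparableSpace W] [MeasurableSpace W] [BorelSpace W]
    (θ : Measure (W × W)) {c : ℝ≥0∞}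
    (h0 : c ≠ 0) (htop : c ≠ ∞) (hI : ∫⁻ p, edist p.1 p.2 ∂θ ≤ c ^ 2) :
    levyProkhorovEDist (θ.map Prod.fst) (θ.map Prod.snd) ≤ c := by
  have hc := coupling_meas_le θ h0 htop hI
  refine sInf_le fun B hB => ?_
  have hT : MeasurableSet (Metric.thickening c.toReal B) := Metric.isOpen_thickening.measurableSet
  rw [Measure.map_apply measurable_fst hB, Measure.map_apply measurable_snd hB,
    Measure.map_apply measurable_fst hT, Measure.map_apply measurable_snd hT]
  constructor
  · refine (measure_mono fun p hp => ?_).trans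
      ((measure_union_le _ _).trans (add_le_add le_rfl hc))
    by_cases h : c ≤ edist p.1 p.2
    · exact Or.inr h
    · refine Or.inl ((Metric.mem_thickening_iff_exists_edist_lt _ _).2 ⟨p.1, hp, ?_⟩)
      rw [ENNReal.ofReal_toReal htop, edist_comm]
      exact not_le.1 h
  · refine (measure_mono fun p hp => ?_).trans
      ((measure_union_le _ _).trans (add_le_add le_rfl hc))
    by_cases h : c ≤ edist p.1 p.2
    · exact Or.inr h
    · refine Or.inl ((Metric.mem_thickening_iff_exists_edist_lt _ _).2 ⟨p.2, hp, ?_⟩)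
      rw [ENNReal.ofReal_toReal htop]
      exact not_le.1 h

/-- The bound with constant `1`, sharper than the one with `3 / 2`. -/
lemma levyProkhorovEDist_sq_le_cost {W : Type*} [MetricSpace W]
    [TopologicalSpace.SeparableSpace W] [MeasurableSpace W] [BorelSpace W]
    (θ : Measure (W × W)) :
    levyProkhorovEDist (θ.map Prod.fst) (θ.map Prod.snd) ^ 2 ≤ ∫⁻ p, edist p.1 p.2 ∂θ := by
  by_contra! h
  set d := levyProkhorovEDist (θ.map Prod.fst) (θ.map Prod.snd)
  set I := ∫⁻ p, edist p.1 p.2 ∂θ with hI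
  have hr : (I ^ (1 / 2 : ℝ)) ^ 2 = I := by
    rw [← ENNReal.rpow_natCast, ← ENNReal.rpow_mul]
    norm_num
  have hlt : I ^ (1 / 2 : ℝ) < d := by
    by_contra! h'
    exact absurd (hr ▸ pow_le_pow_left' h' 2) (not_le.2 h)
  -- `c` strictly above `√I`, so that `c > 0` even when the cost vanishes
  obtain ⟨c, hc1, hc2⟩ := exists_between hlt
  have hIc : I ≤ c ^ 2 := hr ▸ pow_le_pow_left' hc1.le 2
  exact absurd (levyProkhorovEDist_le_of_coupling θ (pos_of_gt hc1).ne' hc2.ne_top hIc)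
    (not_le.2 hc2)

/-- Section 6.7: for any coupling `θ` of `μ` and `ν`,
`d_Prokhorov(μ,ν) ≤ √((3/2)·∫ ρ(z₁,z₂) dθ)` (stated in the equivalent squared form in `ℝ≥0∞`),
and consequently `d_Prokhorov(μ,ν)² ≤ (3/2)·d_Wasserstein(μ,ν)`. -/
theorem stmt_19 {W : Type*} [MetricSpace W] [TopologicalSpace.SeparableSpace W]
    [MeasurableSpace W] [BorelSpace W]
    (μ ν : Measure W) [IsProbabilityMeasure μ] [IsProbabilityMeasure ν] :
    (∀ θ : Measure (W × W), IsProbabilityMeasure θ →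
      θ.map Prod.fst = μ → θ.map Prod.snd = ν →
      (levyProkhorovEDist μ ν) ^ 2 ≤ (3 / 2 : ℝ≥0∞) * ∫⁻ p, edist p.1 p.2 ∂θ) ∧
    (levyProkhorovEDist μ ν) ^ 2 ≤ (3 / 2 : ℝ≥0∞) * wassersteinDist μ ν := by
  have key : ∀ θ : Measure (W × W), θ.map Prod.fst = μ → θ.map Prod.snd = ν →
      levyProkhorovEDist μ ν ^ 2 ≤ ∫⁻ p, edist p.1 p.2 ∂θ := by
    rintro θ rfl rfl
    exact levyProkhorovEDist_sq_le_cost θ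
  have one_le : (1 : ℝ≥0∞) ≤ 3 / 2 := by
    rw [ENNReal.le_div_iff_mul_le (by simp) (by simp)]
    norm_num
  exact ⟨fun θ _ h1 h2 => (key θ h1 h2).trans (le_mul_of_one_le_left' one_le),
    (le_iInf fun θ => key θ.1 θ.2.2.1 θ.2.2.2 : _ ≤ wassersteinDist μ ν).trans (le_mul_of_one_le_left' one_le)⟩
end
end
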